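/- arXiv:1407.1983 — 9 statements merged into one kernel-verified Lean document; each statement's English description precedes it below -/
import Mathlib

section
/- A function f : {1,…,k} → ℕ is an S-parking function of the finite sets A_1,…,A_k if and only if there exists a permutation π_1,π_2,…,π_k of {1,…,k} such that for every i = 1,2,…,k, |A_{π_i} ∩ ⋁_{i ≤ j ≤ k} A_{π_j}| > f(π_i). -/
/-- `⋁_{i ∈ I} A i`: the (finite) set of elements belonging to exactly one of the
sets `A i` with `i ∈ I`. -/
def onlyOne {α : Type*} [DecidableEq α] {k : ℕ} (A : Fin k → Finset α)
    (I : Finset (Fin k)) : Finset α :=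
  (I.biUnion A).filter fun e => (I.filter fun i => e ∈ A i).card = 1

/-- `f` is an S-parking function of the sets `A 0, …, A (k-1)`. -/
def IsSParkingFun {α : Type*} [DecidableEq α] {k : ℕ} (A : Fin k → Finset α)
    (f : Fin k → ℕ) : Prop :=
  ∀ I : Finset (Fin k), I.Nonempty → ∃ i ∈ I, f i < (A i ∩ onlyOne A I).card

theorem onlyOne_anti {α : Type*} [DecidableEq α] {k : ℕ} (A : Fin k → Finset α)
    {I J : Finset (Fin k)} (h : I ⊆ J) {a : Fin k} (ha : a ∈ I) :
    A a ∩ onlyOne A J ⊆ A a ∩ onlyOne A I := by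
  intro e he
  simp only [onlyOne, Finset.mem_inter, Finset.mem_filter, Finset.mem_biUnion] at he ⊢
  obtain ⟨hea, -, hc⟩ := he
  refine ⟨hea, ⟨a, ha, hea⟩, ?_⟩
  apply le_antisymm
  · rw [← hc]
    exact Finset.card_le_card (Finset.filter_subset_filter _ h)
  · exact Finset.card_pos.mpr ⟨a, Finset.mem_filter.mpr ⟨ha, hea⟩⟩

theorem exists_list {α : Type*} [DecidableEq α] {k : ℕ} (A : Fin k → Finset α)
    (f : Fin k → ℕ) (h : IsSParkingFun A f) (I : Finset (Fin k)) :
    ∃ l : List (Fin k), l.Nodup ∧ l.toFinset = I ∧ ∀ (n : ℕ) (hn : n < l.length),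
      f l[n] < (A l[n] ∩ onlyOne A (l.drop n).toFinset).card := by
  induction I using Finset.strongInduction with
  | H I ih =>
    rcases I.eq_empty_or_nonempty with rfl | hI
    · exact ⟨[], by simp⟩
    · obtain ⟨a, ha, hf⟩ := h I hI
      obtain ⟨l, hl, hlI, hp⟩ := ih (I.erase a) (Finset.erase_ssubset ha)
      have hal : a ∉ l := by
        rw [← List.mem_toFinset, hlI]; simp
      have hI' : (a :: l).toFinset = I := by
        rw [List.toFinset_cons, hlI, Finset.insert_erase ha]
      refine ⟨a :: l, List.nodup_cons.mpr ⟨hal, hl⟩, hI', ?_⟩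
      intro n hn
      cases n with
      | zero => rw [List.drop_zero, hI']; exact hf
      | succ n => exact hp n (by simpa using hn)

theorem sparking_fun_iff_perm {α : Type*} [DecidableEq α] {k : ℕ}
    (A : Fin k → Finset α) (f : Fin k → ℕ) :
    IsSParkingFun A f ↔
      ∃ π : Equiv.Perm (Fin k), ∀ i : Fin k,
        f (π i) < (A (π i) ∩ onlyOne A ((Finset.Ici i).image π)).card := by
  constructor
  · intro h
    obtain ⟨l, hl, hlI, hp⟩ := exists_list A f h Finset.univ
    have hlen : l.length = k := by
      rw [← List.toFinset_card_of_nodup hl, hlI]; simp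
    let g : Fin k → Fin k := fun i => l[i.val]'(by rw [hlen]; exact i.2)
    have hg : Function.Injective g := by
      intro i j hij
      exact Fin.ext ((hl.getElem_inj_iff).mp hij)
    refine ⟨Equiv.ofBijective g (Finite.injective_iff_bijective.mp hg), fun i => ?_⟩
    have himg : (Finset.Ici i).image (Equiv.ofBijective g (Finite.injective_iff_bijective.mp hg))
        = (l.drop i.val).toFinset := by
      ext x
      simp only [Finset.mem_image, Finset.mem_Ici, List.mem_toFinset, Equiv.ofBijective_apply,
        List.mem_drop_iff_getElem]
      constructor
      · rintro ⟨j, hj, rfl⟩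
        have hj' : i.val ≤ j.val := hj
        refine ⟨j.val - i.val, by omega, ?_⟩
        simp only [g]
        congr 1
        omega
      · rintro ⟨j, hj, rfl⟩
        refine ⟨⟨i.val + j, by omega⟩, ?_, rfl⟩
        exact Nat.le_add_right _ _
    rw [himg]
    exact hp i.val (by rw [hlen]; exact i.2)
  · rintro ⟨π, hπ⟩ I hI
    have hne : (I.image π.symm).Nonempty := hI.image _
    have hmem := Finset.min'_mem _ hne
    set m := (I.image π.symm).min' hne with hm
    have hmI : π m ∈ I := by
      obtain ⟨x, hx, hxm⟩ := Finset.mem_image.mp hmem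
      rw [← hxm]; simpa using hx
    refine ⟨π m, hmI, (hπ m).trans_le (Finset.card_le_card (onlyOne_anti A ?_ hmI))⟩
    intro x hx
    refine Finset.mem_image.mpr ⟨π.symm x, Finset.mem_Ici.mpr ?_, by simp⟩
    exact Finset.min'_le _ _ (Finset.mem_image_of_mem _ hx)
end

section
/- A finite set D with |D| = k is an S-parking set of the finite sets A_1,…,A_k if and only if there exists a permutation π_1,π_2,…,π_k of {1,…,k} such that for every i = 1,2,…,k, D ∩ A_{π_i} ∩ ⋁_{i ≤ j ≤ k} A_{π_j} ≠ ∅. -/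
/-- `D` is an S-parking set of the sets `A 0, …, A (k-1)`. -/
def IsSParkingSet {α : Type*} [DecidableEq α] {k : ℕ} (A : Fin k → Finset α)
    (D : Finset α) : Prop :=
  D.card = k ∧ ∀ I : Finset (Fin k), I.Nonempty → (D ∩ onlyOne A I).Nonempty

theorem mem_onlyOne_iff {α : Type*} [DecidableEq α] {k : ℕ} (A : Fin k → Finset α)
    (I : Finset (Fin k)) (e : α) :
    e ∈ onlyOne A I ↔ ∃ j ∈ I, e ∈ A j ∧ ∀ i ∈ I, e ∈ A i → i = j := by
  unfold onlyOne
  rw [Finset.mem_filter, Finset.card_eq_one]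
  constructor
  · rintro ⟨_, j, hj⟩
    have h : ∀ i, i ∈ I.filter (fun i => e ∈ A i) ↔ i = j := by
      intro i; rw [hj]; simp
    simp only [Finset.mem_filter] at h
    exact ⟨j, ((h j).2 rfl).1, ((h j).2 rfl).2, fun i hi he => (h i).1 ⟨hi, he⟩⟩
  · rintro ⟨j, hj, he, hu⟩
    refine ⟨Finset.mem_biUnion.2 ⟨j, hj, he⟩, j, ?_⟩
    ext i
    simp only [Finset.mem_filter, Finset.mem_singleton]
    constructor
    · rintro ⟨h1, h2⟩; exact hu i h1 h2
    · rintro rfl; exact ⟨hj, he⟩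

theorem exists_order_list {α : Type*} [DecidableEq α] {k : ℕ} (A : Fin k → Finset α)
    (D : Finset α)
    (h : ∀ I : Finset (Fin k), I.Nonempty → (D ∩ onlyOne A I).Nonempty) (n : ℕ) :
    ∀ S : Finset (Fin k), S.card = n → ∃ l : List (Fin k), l.Nodup ∧ l.toFinset = S ∧
      ∀ (m : ℕ) (hm : m < l.length),
        (D ∩ A l[m] ∩ onlyOne A (l.drop m).toFinset).Nonempty := by
  induction n with
  | zero =>
    intro S hS
    refine ⟨[], List.nodup_nil, ?_, ?_⟩
    · simpa using (Finset.card_eq_zero.1 hS).symm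
    · intro m hm; simp at hm
  | succ n ih =>
    intro S hS
    obtain ⟨e, he⟩ := h S (Finset.card_pos.1 (by omega))
    rw [Finset.mem_inter] at he
    obtain ⟨j, hj, hej, _⟩ := (mem_onlyOne_iff A S e).1 he.2
    obtain ⟨l, hl, hlS, hg⟩ := ih (S.erase j) (by rw [Finset.card_erase_of_mem hj]; omega)
    have hS' : (j :: l).toFinset = S := by
      rw [List.toFinset_cons, hlS, Finset.insert_erase hj]
    refine ⟨j :: l, ?_, hS', ?_⟩
    · refine List.nodup_cons.2 ⟨?_, hl⟩
      rw [← List.mem_toFinset, hlS]; simp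
    · intro m hm
      cases m with
      | zero =>
        refine ⟨e, ?_⟩
        rw [List.drop_zero, hS']
        simp only [Finset.mem_inter, List.getElem_cons_zero]
        exact ⟨⟨he.1, hej⟩, he.2⟩
      | succ m =>
        simpa using hg m (by simpa using hm)

theorem sparking_set_iff_perm {α : Type*} [DecidableEq α] {k : ℕ}
    (A : Fin k → Finset α) (D : Finset α) (hD : D.card = k) :
    IsSParkingSet A D ↔
      ∃ π : Equiv.Perm (Fin k), ∀ i : Fin k,
        (D ∩ A (π i) ∩ onlyOne A ((Finset.Ici i).image π)).Nonempty := by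
  constructor
  · rintro ⟨_, h⟩
    obtain ⟨l, hl, hlS, hg⟩ := exists_order_list A D h k Finset.univ (by simp)
    have hlen : l.length = k := by
      rw [← List.toFinset_card_of_nodup hl, hlS]; simp
    have hinj : Function.Injective (fun i : Fin k => l[i.1]'(by omega)) := by
      intro a b hab
      exact Fin.ext ((hl.getElem_inj_iff).1 hab)
    refine ⟨Equiv.ofBijective _ (Finite.injective_iff_bijective.1 hinj), fun i => ?_⟩
    have him : (Finset.Ici i).image
        (Equiv.ofBijective _ (Finite.injective_iff_bijective.1 hinj)) =
        (l.drop i.1).toFinset := by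
      ext x
      simp only [Finset.mem_image, Finset.mem_Ici, Equiv.ofBijective_apply, List.mem_toFinset,
        List.mem_drop_iff_getElem]
      constructor
      · rintro ⟨a, ha, rfl⟩
        have ha' : i.1 ≤ a.1 := ha
        refine ⟨a.1 - i.1, by omega, ?_⟩
        congr 1; omega
      · rintro ⟨m, hm, rfl⟩
        refine ⟨⟨i.1 + m, by omega⟩, ?_, ?_⟩
        · simp [Fin.le_def]
        · rfl
    rw [him]
    exact hg i.1 (by omega)
  · rintro ⟨π, h⟩
    refine ⟨hD, fun I hI => ?_⟩
    obtain ⟨i, hi, hmin⟩ := (I.image π.symm).exists_minimal (hI.image _)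
    have hiI : π i ∈ I := by
      obtain ⟨a, ha, rfl⟩ := Finset.mem_image.1 hi
      simpa using ha
    have hsub : ∀ x ∈ I, x ∈ (Finset.Ici i).image π := by
      intro x hx
      refine Finset.mem_image.2 ⟨π.symm x, ?_, by simp⟩
      rw [Finset.mem_Ici]
      rcases le_total i (π.symm x) with h1 | h1
      · exact h1
      · exact hmin (Finset.mem_image_of_mem _ hx) h1
    obtain ⟨e, he⟩ := h i
    simp only [Finset.mem_inter] at he
    obtain ⟨⟨heD, heA⟩, he1⟩ := he
    obtain ⟨j, hj, hej, hu⟩ := (mem_onlyOne_iff _ _ _).1 he1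
    have hij := hu _ (hsub _ hiI) heA
    refine ⟨e, Finset.mem_inter.2 ⟨heD, (mem_onlyOne_iff _ _ _).2
      ⟨π i, hiI, heA, fun x hx hxe => ?_⟩⟩⟩
    rw [hij]; exact hu x (hsub x hx) hxe
end

section
/- Let D be a finite set with |D| = k and let π_1,π_2,…,π_k be a permutation of {1,…,k} such that D ∩ A_{π_i} ∩ ⋁_{i ≤ j ≤ k} A_{π_j} ≠ ∅ for all i = 1,2,…,k. Then for every i = 1,2,…,k the set D ∩ A_{π_i} ∩ ⋁_{i ≤ j ≤ k} A_{π_j} has exactly one element. -/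
theorem sparking_set_perm_card_one {α : Type*} [DecidableEq α] {k : ℕ}
    (A : Fin k → Finset α) (D : Finset α) (hD : D.card = k)
    (π : Equiv.Perm (Fin k))
    (hπ : ∀ i : Fin k,
      (D ∩ A (π i) ∩ onlyOne A ((Finset.Ici i).image π)).Nonempty) :
    ∀ i : Fin k, (D ∩ A (π i) ∩ onlyOne A ((Finset.Ici i).image π)).card = 1 := by
  have hdisj : ∀ i j : Fin k, i < j → ∀ e,
      e ∈ D ∩ A (π i) ∩ onlyOne A ((Finset.Ici i).image π) →
      e ∈ D ∩ A (π j) ∩ onlyOne A ((Finset.Ici j).image π) → False := by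
    intro i j hij e hi hj
    simp only [Finset.mem_inter, onlyOne, Finset.mem_filter] at hi hj
    obtain ⟨⟨_, hi1⟩, _, hi2⟩ := hi
    obtain ⟨⟨_, hj1⟩, _⟩ := hj
    have h := Finset.card_le_one.mp hi2.le (π i)
      (Finset.mem_filter.mpr
        ⟨Finset.mem_image_of_mem _ (Finset.mem_Ici.mpr le_rfl), hi1⟩) (π j)
      (Finset.mem_filter.mpr
        ⟨Finset.mem_image_of_mem _ (Finset.mem_Ici.mpr hij.le), hj1⟩)
    exact hij.ne (π.injective h)
  set S : Fin k → Finset α :=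
    fun i => D ∩ A (π i) ∩ onlyOne A ((Finset.Ici i).image π) with hS
  have hsum : ∑ i, (S i).card ≤ k := by
    rw [← Finset.card_biUnion]
    · refine (Finset.card_le_card ?_).trans hD.le
      intro e he
      obtain ⟨i, _, hi⟩ := Finset.mem_biUnion.mp he
      exact (Finset.mem_inter.mp (Finset.mem_inter.mp hi).1).1
    · intro i _ j _ hij
      refine Finset.disjoint_left.mpr ?_
      intro e hi hj
      rcases lt_or_gt_of_ne hij with h | h
      · exact hdisj i j h e hi hj
      · exact hdisj j i h e hj hi
  have hle : ∀ i ∈ (Finset.univ : Finset (Fin k)), 1 ≤ (S i).card :=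
    fun i _ => Finset.card_pos.mpr (hπ i)
  have heq : ∑ _i : Fin k, 1 = ∑ i, (S i).card :=
    le_antisymm (Finset.sum_le_sum hle) (by simpa using hsum)
  intro i
  exact ((Finset.sum_eq_sum_iff_of_le hle).mp heq i (Finset.mem_univ i)).symm
end

section
/- Every S-parking set D of the finite sets A_1,…,A_k is a k-element subset of A_1 ∪ A_2 ∪ ⋯ ∪ A_k. -/
theorem sparking_aux {α : Type*} [DecidableEq α] {k : ℕ}
    (A : Fin k → Finset α) (D : Finset α)
    (h : ∀ I : Finset (Fin k), I.Nonempty → (D ∩ onlyOne A I).Nonempty) (n : ℕ) :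
    ∀ I : Finset (Fin k), I.card = n → n ≤ (D ∩ I.biUnion A).card := by
  induction n with
  | zero => intro I _; exact Nat.zero_le _
  | succ n ih =>
    intro I hI
    obtain ⟨e, he⟩ := h I (Finset.card_pos.mp (by omega))
    simp only [onlyOne, Finset.mem_inter, Finset.mem_filter] at he
    obtain ⟨heD, heU, hc⟩ := he
    obtain ⟨i, hi⟩ := Finset.card_eq_one.mp hc
    have hi' : i ∈ I.filter fun i => e ∈ A i := by rw [hi]; simp
    have hiI : i ∈ I := (Finset.mem_filter.mp hi').1
    have h1 := ih (I.erase i) (by rw [Finset.card_erase_of_mem hiI]; omega)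
    have h2 : (D ∩ (I.erase i).biUnion A).card < (D ∩ I.biUnion A).card := by
      apply Finset.card_lt_card
      refine (Finset.ssubset_iff_of_subset ?_).mpr
        ⟨e, Finset.mem_inter.mpr ⟨heD, heU⟩, ?_⟩
      · exact Finset.inter_subset_inter_left
          (Finset.biUnion_subset_biUnion_of_subset_left A (Finset.erase_subset i I))
      · intro hm
        obtain ⟨j, hj, hej⟩ := Finset.mem_biUnion.mp (Finset.mem_inter.mp hm).2
        obtain ⟨hne, hjI⟩ := Finset.mem_erase.mp hj
        have hj' : j ∈ I.filter fun i => e ∈ A i := Finset.mem_filter.mpr ⟨hjI, hej⟩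
        rw [hi] at hj'
        exact hne (Finset.mem_singleton.mp hj')
    omega

theorem sparking_set_subset_union {α : Type*} [DecidableEq α] {k : ℕ}
    (A : Fin k → Finset α) (D : Finset α) (hD : IsSParkingSet A D) :
    D.card = k ∧ D ⊆ Finset.univ.biUnion A := by
  obtain ⟨hc, h⟩ := hD
  refine ⟨hc, ?_⟩
  have h1 := sparking_aux A D h k Finset.univ (by simp)
  have h2 := Finset.eq_of_subset_of_card_le
    (Finset.inter_subset_left (s₁ := D) (s₂ := Finset.univ.biUnion A)) (by omega)
  exact Finset.inter_eq_left.mp h2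
end

section
/- Let f be an S-parking function of the finite sets A_1,…,A_k, let e ∈ A_1 ∩ ⋁_{1 ≤ j ≤ k} A_j, and suppose f(1) > 0. Then the function f' defined by f'(1) = f(1) − 1 and f'(i) = f(i) for i = 2,…,k is an S-parking function of the sets A_1 \ {e}, A_2, …, A_k. -/
theorem sparking_fun_delete_elem {α : Type*} [DecidableEq α] {k : ℕ}
    (A : Fin (k + 1) → Finset α) (f : Fin (k + 1) → ℕ)
    (hf : IsSParkingFun A f) (e : α)
    (he : e ∈ A 0 ∩ onlyOne A Finset.univ) (hf0 : 0 < f 0) :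
    IsSParkingFun (Function.update A 0 (A 0 \ {e}))
      (Function.update f 0 (f 0 - 1)) := by
  have he0 : ∀ i, e ∈ A i → i = 0 := by
    intro i hi
    simp only [onlyOne, Finset.mem_inter, Finset.mem_filter] at he
    exact Finset.card_le_one.mp he.2.2.le i (by simp [hi]) 0 (by simp [he.1])
  have hA : ∀ x, x ≠ e → ∀ i, x ∈ Function.update A 0 (A 0 \ {e}) i ↔ x ∈ A i := by
    intro x hx i
    by_cases h : i = 0
    · subst h; simp [hx]
    · simp [h]
  intro I hI
  obtain ⟨i, hi, hlt⟩ := hf I hI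
  refine ⟨i, hi, ?_⟩
  have hsub : (A i ∩ onlyOne A I).erase e ⊆
      Function.update A 0 (A 0 \ {e}) i ∩ onlyOne (Function.update A 0 (A 0 \ {e})) I := by
    intro x hx
    rw [Finset.mem_erase] at hx
    simpa only [onlyOne, Finset.mem_inter, Finset.mem_filter, Finset.mem_biUnion,
      hA x hx.1] using hx.2
  refine lt_of_lt_of_le ?_ (Finset.card_le_card hsub)
  by_cases h : i = 0
  · subst h
    have := Finset.pred_card_le_card_erase (s := A 0 ∩ onlyOne A I) (a := e)
    rw [Function.update_self]
    omega
  · rw [Finset.erase_eq_of_notMem (fun h' => h (he0 i (Finset.mem_inter.mp h').1)),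
      Function.update_of_ne h]
    exact hlt
end

section
/- Let D be an S-parking set of the finite sets A_1,…,A_k and let e ∈ A_i ∩ ⋁_{1 ≤ j ≤ k} A_j for some i with 1 ≤ i ≤ k. If e ∉ D, then D is an S-parking set of the sets A_1,…,A_{i−1}, A_i \ {e}, A_{i+1},…,A_k. -/
theorem sparking_set_delete_elem {α : Type*} [DecidableEq α] {k : ℕ}
    (A : Fin k → Finset α) (D : Finset α) (hD : IsSParkingSet A D)
    (i : Fin k) (e : α) (he : e ∈ A i ∩ onlyOne A Finset.univ) (heD : e ∉ D) :
    IsSParkingSet (Function.update A i (A i \ {e})) D := by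
  refine ⟨hD.1, fun I hI => ?_⟩
  obtain ⟨x, hx⟩ := hD.2 I hI
  have key : ∀ j, x ∈ D → (x ∈ Function.update A i (A i \ {e}) j ↔ x ∈ A j) := by
    intro j hxD
    have hne : x ≠ e := fun h => heD (h ▸ hxD)
    by_cases hj : j = i
    · subst hj
      simp [hne]
    · simp [Function.update_of_ne hj]
  refine ⟨x, ?_⟩
  rw [Finset.mem_inter] at hx ⊢
  refine ⟨hx.1, ?_⟩
  have h2 := hx.2
  simp only [onlyOne, Finset.mem_filter, Finset.mem_biUnion] at h2 ⊢
  simpa only [key _ hx.1] using h2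
end

section
/- Let D be an S-parking set of the finite sets A_1,…,A_k with k ≥ 2, and let e ∈ A_i ∩ ⋁_{1 ≤ j ≤ k} A_j for some i with 1 ≤ i ≤ k. If e ∈ D, then D \ {e} is an S-parking set of the k−1 sets A_1,…,A_{i−1}, A_{i+1},…,A_k (the family with the i-th set deleted). -/
theorem sparking_set_delete_set {α : Type*} [DecidableEq α] {k : ℕ}
    (hk : 2 ≤ k + 1) (A : Fin (k + 1) → Finset α) (D : Finset α)
    (hD : IsSParkingSet A D) (i : Fin (k + 1)) (e : α)
    (he : e ∈ A i ∩ onlyOne A Finset.univ) (heD : e ∈ D) :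
    IsSParkingSet (fun j : Fin k => A (i.succAbove j)) (D.erase e) := by
  obtain ⟨hc, hI⟩ := hD
  refine ⟨by rw [Finset.card_erase_of_mem heD, hc]; rfl, fun I hne => ?_⟩
  obtain ⟨x, hx⟩ := hI (I.map i.succAboveEmb) (hne.map)
  simp only [onlyOne, Finset.mem_inter, Finset.mem_filter, Finset.mem_biUnion] at hx he
  obtain ⟨hxD, ⟨a, haI, hxa⟩, hcard⟩ := hx
  obtain ⟨b, hbI, rfl⟩ := Finset.mem_map.1 haI
  have hxb : x ∈ A (i.succAbove b) := hxa
  refine ⟨x, ?_⟩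
  simp only [onlyOne, Finset.mem_inter, Finset.mem_filter, Finset.mem_biUnion,
    Finset.mem_erase]
  refine ⟨⟨?_, hxD⟩, ⟨b, hbI, hxb⟩, ?_⟩
  · rintro rfl
    obtain ⟨hi, -, h1⟩ := he
    have := Finset.card_le_one.1 h1.le i (by simp [hi]) (i.succAbove b) (by simp [hxb])
    exact Fin.succAbove_ne i b this.symm
  · rw [Finset.filter_map, Finset.card_map] at hcard
    exact hcard
end

section
/- For any finite sets A_1,…,A_k, there exists a bijection between the set P(A_1,…,A_k) of S-parking functions of A_1,…,A_k and the set Q(A_1,…,A_k) of S-parking sets of A_1,…,A_k; in particular the number of S-parking functions of A_1,…,A_k equals the number of S-parking sets of A_1,…,A_k. -/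
namespace SPark

variable {α : Type*} [DecidableEq α] {k : ℕ}

theorem mem_onlyOne (A : Fin k → Finset α) (I : Finset (Fin k)) (x : α) :
    x ∈ onlyOne A I ↔ ∃ j ∈ I, x ∈ A j ∧ ∀ l ∈ I, x ∈ A l → l = j := by
  unfold onlyOne
  simp only [Finset.mem_filter, Finset.mem_biUnion, Finset.card_eq_one]
  constructor
  · rintro ⟨-, j, hj⟩
    have h : ∀ l, (l ∈ I ∧ x ∈ A l) ↔ l = j := by
      intro l
      have := Finset.ext_iff.1 hj l
      simpa using this
    exact ⟨j, ((h j).2 rfl).1, ((h j).2 rfl).2, fun l h1 h2 => (h l).1 ⟨h1, h2⟩⟩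
  · rintro ⟨j, hj, hx, h⟩
    refine ⟨⟨j, hj, hx⟩, j, ?_⟩
    ext l
    simp only [Finset.mem_filter, Finset.mem_singleton]
    exact ⟨fun h' => h l h'.1 h'.2, fun h' => h' ▸ ⟨hj, hx⟩⟩

/-- Parking functions on a subfamily `S`, normalised to vanish off `S`. -/
def P (A : Fin k → Finset α) (S : Finset (Fin k)) : Set (Fin k → ℕ) :=
  {f | (∀ i, i ∉ S → f i = 0) ∧
    ∀ I : Finset (Fin k), I ⊆ S → I.Nonempty → ∃ i ∈ I, f i < (A i ∩ onlyOne A I).card}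

/-- Parking sets on a subfamily `S`. -/
def Q (A : Fin k → Finset α) (S : Finset (Fin k)) : Set (Finset α) :=
  {D | D.card = S.card ∧
    ∀ I : Finset (Fin k), I ⊆ S → I.Nonempty → (D ∩ onlyOne A I).Nonempty}

theorem card_le (A : Fin k → Finset α) (D : Finset α) (n : ℕ) : ∀ S : Finset (Fin k),
    S.card = n → (∀ I : Finset (Fin k), I ⊆ S → I.Nonempty → (D ∩ onlyOne A I).Nonempty) →
    n ≤ (D ∩ S.biUnion A).card := by
  induction n with
  | zero => intros; omega
  | succ n ih =>
    intro S hS h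
    obtain ⟨e, he⟩ := h S subset_rfl (Finset.card_pos.1 (by omega))
    rw [Finset.mem_inter, mem_onlyOne] at he
    obtain ⟨heD, i, hi, hei, hu⟩ := he
    have h1 := ih (S.erase i) (by rw [Finset.card_erase_of_mem hi]; omega)
      (fun I hI => h I (hI.trans (Finset.erase_subset _ _)))
    have h2 : D ∩ (S.erase i).biUnion A ⊂ D ∩ S.biUnion A := by
      rw [Finset.ssubset_iff_of_subset]
      · refine ⟨e, ?_, ?_⟩
        · simp only [Finset.mem_inter, Finset.mem_biUnion]
          exact ⟨heD, i, hi, hei⟩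
        · simp only [Finset.mem_inter, Finset.mem_biUnion, Finset.mem_erase]
          rintro ⟨-, l, ⟨hl, hl'⟩, hel⟩
          exact hl (hu l hl' hel)
      · exact Finset.inter_subset_inter subset_rfl
          (Finset.biUnion_subset_biUnion_of_subset_left _ (Finset.erase_subset _ _))
    have := Finset.card_lt_card h2
    omega

theorem subset_of_mem_Q {A : Fin k → Finset α} {S : Finset (Fin k)} {D : Finset α}
    (h : D ∈ Q A S) : D ⊆ S.biUnion A := by
  have h1 := card_le A D _ S rfl h.2
  have h2 : D ∩ S.biUnion A = D :=
    Finset.eq_of_subset_of_card_le Finset.inter_subset_left (by rw [h.1]; exact h1)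
  exact Finset.inter_eq_left.1 h2

section step
variable {A : Fin k → Finset α} {S : Finset (Fin k)} {e : α} {i : Fin k}

/-- Remove `e` from `A i`. -/
def del (A : Fin k → Finset α) (i : Fin k) (e : α) : Fin k → Finset α :=
  Function.update A i ((A i).erase e)

theorem mem_del (hu : ∀ l ∈ S, e ∈ A l → l = i) (j : Fin k) (hj : j ∈ S) (x : α) :
    x ∈ del A i e j ↔ x ≠ e ∧ x ∈ A j := by
  unfold del
  by_cases h : j = i
  · subst h; simp
  · rw [Function.update_of_ne h]
    constructor
    · intro hx
      exact ⟨fun h' => h (hu j hj (h' ▸ hx)), hx⟩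
    · exact fun h => h.2

theorem onlyOne_del (hu : ∀ l ∈ S, e ∈ A l → l = i) (I : Finset (Fin k)) (hI : I ⊆ S) :
    onlyOne (del A i e) I = (onlyOne A I).erase e := by
  ext x
  rw [Finset.mem_erase, mem_onlyOne, mem_onlyOne]
  constructor
  · rintro ⟨j, hj, hx, h⟩
    rw [mem_del hu j (hI hj)] at hx
    exact ⟨hx.1, j, hj, hx.2, fun l hl hxl => h l hl ((mem_del hu l (hI hl) x).2 ⟨hx.1, hxl⟩)⟩
  · rintro ⟨hne, j, hj, hx, h⟩
    exact ⟨j, hj, (mem_del hu j (hI hj) x).2 ⟨hne, hx⟩,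
      fun l hl hxl => h l hl ((mem_del hu l (hI hl) x).1 hxl).2⟩

theorem inter_del (hu : ∀ l ∈ S, e ∈ A l → l = i) (I : Finset (Fin k)) (hI : I ⊆ S)
    (j : Fin k) (hj : j ∈ I) :
    del A i e j ∩ onlyOne (del A i e) I = (A j ∩ onlyOne A I).erase e := by
  ext x
  rw [onlyOne_del hu I hI]
  simp only [Finset.mem_inter, Finset.mem_erase, mem_del hu j (hI hj)]
  tauto

theorem card_ne (hu : ∀ l ∈ S, e ∈ A l → l = i) (I : Finset (Fin k)) (hI : I ⊆ S)
    (j : Fin k) (hj : j ∈ I) (hji : j ≠ i) :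
    (del A i e j ∩ onlyOne (del A i e) I).card = (A j ∩ onlyOne A I).card := by
  rw [inter_del hu I hI j hj, Finset.erase_eq_of_notMem]
  intro h
  exact hji (hu j (hI hj) (Finset.mem_inter.1 h).1)

theorem mem_self (he : e ∈ A i) (hu : ∀ l ∈ S, e ∈ A l → l = i) (I : Finset (Fin k)) (hI : I ⊆ S)
    (hi : i ∈ I) : e ∈ onlyOne A I :=
  (mem_onlyOne A I e).2 ⟨i, hi, he, fun l hl => hu l (hI hl)⟩

theorem card_self (he : e ∈ A i) (hu : ∀ l ∈ S, e ∈ A l → l = i) (I : Finset (Fin k)) (hI : I ⊆ S)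
    (hi : i ∈ I) :
    (del A i e i ∩ onlyOne (del A i e) I).card + 1 = (A i ∩ onlyOne A I).card := by
  rw [inter_del hu I hI i hi, Finset.card_erase_add_one]
  exact Finset.mem_inter.2 ⟨he, mem_self he hu I hI hi⟩

/-- Increment the value at `i`. -/
def inc (i : Fin k) (f : Fin k → ℕ) : Fin k → ℕ := Function.update f i (f i + 1)

theorem inc_inj (i : Fin k) : Function.Injective (inc i) := by
  intro f g h
  funext j
  have := congrFun h j
  unfold inc at this
  by_cases hj : j = i
  · subst hj; simpa using this
  · simpa [hj] using this

theorem inc_mem (hi : i ∈ S) (he : e ∈ A i) (hu : ∀ l ∈ S, e ∈ A l → l = i) (f : Fin k → ℕ) :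
    inc i f ∈ P A S ↔ f ∈ P (del A i e) S := by
  have key : ∀ I : Finset (Fin k), I ⊆ S → ∀ j ∈ I, (inc i f j < (A j ∩ onlyOne A I).card ↔
      f j < (del A i e j ∩ onlyOne (del A i e) I).card) := by
    intro I hI j hj
    by_cases h : j = i
    · subst h
      rw [← card_self he hu I hI hj]
      simp [inc]
    · rw [card_ne hu I hI j hj h]
      simp [inc, h]
  have k2 : ∀ j, j ∉ S → inc i f j = f j := by
    intro j hj
    have : j ≠ i := fun h => hj (h ▸ hi)
    simp [inc, this]
  constructor
  · rintro ⟨h1, h2⟩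
    refine ⟨fun j hj => by rw [← k2 j hj]; exact h1 j hj, fun I hI hne => ?_⟩
    obtain ⟨j, hj, h⟩ := h2 I hI hne
    exact ⟨j, hj, (key I hI j hj).1 h⟩
  · rintro ⟨h1, h2⟩
    refine ⟨fun j hj => by rw [k2 j hj]; exact h1 j hj, fun I hI hne => ?_⟩
    obtain ⟨j, hj, h⟩ := h2 I hI hne
    exact ⟨j, hj, (key I hI j hj).2 h⟩

theorem P_eq (hi : i ∈ S) (he : e ∈ A i) (hu : ∀ l ∈ S, e ∈ A l → l = i) :
    P A S = P A (S.erase i) ∪ inc i '' P (del A i e) S := by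
  ext f
  constructor
  · intro hf
    by_cases h : f i = 0
    · left
      refine ⟨fun j hj => ?_, fun I hI => hf.2 I (hI.trans (Finset.erase_subset _ _))⟩
      by_cases hji : j = i
      · rw [hji, h]
      · exact hf.1 j (fun h' => hj (Finset.mem_erase.2 ⟨hji, h'⟩))
    · right
      have : inc i (Function.update f i (f i - 1)) = f := by
        unfold inc
        simp only [Function.update_self, Function.update_idem]
        rw [Nat.sub_add_cancel (by omega), Function.update_eq_self]
      refine ⟨_, ?_, this⟩
      rw [← inc_mem hi he hu, this]
      exact hf
  · rintro (hf | ⟨g, hg, rfl⟩)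
    · refine ⟨fun j hj => hf.1 j (fun h => hj (Finset.mem_of_mem_erase h)), fun I hI hne => ?_⟩
      by_cases hiI : i ∈ I
      · refine ⟨i, hiI, ?_⟩
        rw [hf.1 i (Finset.notMem_erase _ _)]
        exact Finset.card_pos.2 ⟨e, Finset.mem_inter.2 ⟨he, mem_self he hu I hI hiI⟩⟩
      · exact hf.2 I (Finset.subset_erase.2 ⟨hI, hiI⟩) hne
    · exact (inc_mem hi he hu g).2 hg

theorem P_disj : Disjoint (P A (S.erase i)) (inc i '' P (del A i e) S) := by
  rw [Set.disjoint_left]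
  rintro f hf ⟨g, -, rfl⟩
  have := hf.1 i (Finset.notMem_erase _ _)
  simp [inc] at this

theorem notMem_of_erase (hu : ∀ l ∈ S, e ∈ A l → l = i) {D : Finset α}
    (hD : D ∈ Q A (S.erase i)) : e ∉ D := by
  intro h
  have := subset_of_mem_Q hD h
  simp only [Finset.mem_biUnion, Finset.mem_erase] at this
  obtain ⟨l, ⟨h1, h2⟩, h3⟩ := this
  exact h1 (hu l h2 h3)

theorem notMem_of_del (hu : ∀ l ∈ S, e ∈ A l → l = i) {D : Finset α}
    (hD : D ∈ Q (del A i e) S) : e ∉ D := by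
  intro h
  obtain ⟨l, h1, h2⟩ := Finset.mem_biUnion.1 (subset_of_mem_Q hD h)
  exact ((mem_del hu l h1 e).1 h2).1 rfl

theorem Q_eq (hi : i ∈ S) (he : e ∈ A i) (hu : ∀ l ∈ S, e ∈ A l → l = i) :
    Q A S = insert e '' Q A (S.erase i) ∪ Q (del A i e) S := by
  have hc := Finset.card_erase_add_one hi
  ext D
  constructor
  · intro hD
    by_cases h : e ∈ D
    · left
      refine ⟨D.erase e, ⟨?_, fun I hI hne => ?_⟩, Finset.insert_erase h⟩
      · have := Finset.card_erase_add_one h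
        have := hD.1
        omega
      · obtain ⟨x, hx⟩ := hD.2 I (hI.trans (Finset.erase_subset _ _)) hne
        rw [Finset.mem_inter] at hx
        refine ⟨x, Finset.mem_inter.2 ⟨Finset.mem_erase.2 ⟨?_, hx.1⟩, hx.2⟩⟩
        rintro rfl
        obtain ⟨j, hj, hxj, -⟩ := (mem_onlyOne _ _ _).1 hx.2
        have := Finset.mem_erase.1 (hI hj)
        exact this.1 (hu j this.2 hxj)
    · right
      refine ⟨hD.1, fun I hI hne => ?_⟩
      obtain ⟨x, hx⟩ := hD.2 I hI hne
      rw [Finset.mem_inter] at hx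
      refine ⟨x, Finset.mem_inter.2 ⟨hx.1, ?_⟩⟩
      rw [onlyOne_del hu I hI]
      exact Finset.mem_erase.2 ⟨fun h' => h (h' ▸ hx.1), hx.2⟩
  · rintro (⟨D, hD, rfl⟩ | hD)
    · refine ⟨?_, fun I hI hne => ?_⟩
      · rw [Finset.card_insert_of_notMem (notMem_of_erase hu hD), hD.1, hc]
      · by_cases hiI : i ∈ I
        · exact ⟨e, Finset.mem_inter.2 ⟨Finset.mem_insert_self _ _, mem_self he hu I hI hiI⟩⟩
        · exact (hD.2 I (Finset.subset_erase.2 ⟨hI, hiI⟩) hne).mono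
            (Finset.inter_subset_inter (Finset.subset_insert _ _) subset_rfl)
    · refine ⟨hD.1, fun I hI hne => (hD.2 I hI hne).mono ?_⟩
      rw [onlyOne_del hu I hI]
      exact Finset.inter_subset_inter subset_rfl (Finset.erase_subset _ _)

theorem Q_disj (hu : ∀ l ∈ S, e ∈ A l → l = i) :
    Disjoint (insert e '' Q A (S.erase i)) (Q (del A i e) S) := by
  rw [Set.disjoint_left]
  rintro _ ⟨D, -, rfl⟩ h
  exact notMem_of_del hu h (Finset.mem_insert_self _ _)

theorem Q_injOn (hu : ∀ l ∈ S, e ∈ A l → l = i) :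
    Set.InjOn (insert e : Finset α → Finset α) (Q A (S.erase i)) := by
  intro D hD E hE h
  rw [← Finset.erase_insert (notMem_of_erase hu hD), h,
    Finset.erase_insert (notMem_of_erase hu hE)]

end step

theorem base (A : Fin k → Finset α) :
    (P A ∅).Finite ∧ (P A ∅).encard = (Q A ∅).encard := by
  have hP : P A ∅ = {0} := by
    ext f
    simp only [P, Set.mem_ofPred_eq, Set.mem_singleton_iff]
    constructor
    · intro h
      funext j
      exact h.1 j (Finset.notMem_empty j)
    · rintro rfl
      refine ⟨fun _ _ => rfl, fun I hI hne => ?_⟩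
      rw [Finset.subset_empty.1 hI] at hne
      exact absurd hne Finset.not_nonempty_empty
  have hQ : Q A ∅ = {∅} := by
    ext D
    simp only [Q, Set.mem_ofPred_eq, Set.mem_singleton_iff]
    constructor
    · intro h
      exact Finset.card_eq_zero.1 h.1
    · rintro rfl
      refine ⟨rfl, fun I hI hne => ?_⟩
      rw [Finset.subset_empty.1 hI] at hne
      exact absurd hne Finset.not_nonempty_empty
  rw [hP, hQ]
  simp

theorem main (n : ℕ) : ∀ (A : Fin k → Finset α) (S : Finset (Fin k)),
    S.card + ∑ j ∈ S, (A j).card ≤ n →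
    (P A S).Finite ∧ (P A S).encard = (Q A S).encard := by
  induction n with
  | zero =>
    intro A S h
    have : S = ∅ := Finset.card_eq_zero.1 (by omega)
    subst this
    exact base A
  | succ n ih =>
    intro A S h
    rcases S.eq_empty_or_nonempty with rfl | hS
    · exact base A
    rcases (onlyOne A S).eq_empty_or_nonempty with h0 | ⟨e, he⟩
    · have hP : P A S = ∅ := by
        rw [Set.eq_empty_iff_forall_notMem]
        intro f hf
        obtain ⟨i, -, hi⟩ := hf.2 S subset_rfl hS
        simp [h0] at hi
      have hQ : Q A S = ∅ := by
        rw [Set.eq_empty_iff_forall_notMem]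
        intro f hf
        have := hf.2 S subset_rfl hS
        simp [h0] at this
      rw [hP, hQ]
      simp
    · obtain ⟨i, hi, hei, hu⟩ := (mem_onlyOne _ _ _).1 he
      have hc := Finset.card_erase_add_one hi
      have hs := Finset.add_sum_erase S (fun j => (A j).card) hi
      have hs' := Finset.add_sum_erase S (fun j => (del A i e j).card) hi
      have hee : ∑ j ∈ S.erase i, (del A i e j).card = ∑ j ∈ S.erase i, (A j).card := by
        refine Finset.sum_congr rfl fun j hj => ?_
        rw [del, Function.update_of_ne (Finset.ne_of_mem_erase hj)]
      have hd : (del A i e i).card + 1 = (A i).card := by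
        rw [del, Function.update_self, Finset.card_erase_add_one hei]
      obtain ⟨f1, c1⟩ := ih A (S.erase i) (by omega)
      obtain ⟨f2, c2⟩ := ih (del A i e) S (by omega)
      rw [P_eq hi hei hu, Q_eq hi hei hu]
      refine ⟨f1.union (f2.image _), ?_⟩
      rw [Set.encard_union_eq P_disj, Set.encard_union_eq (Q_disj hu),
        (inc_inj i).encard_image, (Q_injOn hu).encard_image, c1, c2]

end SPark

theorem sparking_fun_set_bijection {α : Type*} [DecidableEq α] {k : ℕ}
    (A : Fin k → Finset α) :
    (∃ φ : {f : Fin k → ℕ // IsSParkingFun A f} →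
        {D : Finset α // IsSParkingSet A D}, Function.Bijective φ) ∧
      {f : Fin k → ℕ | IsSParkingFun A f}.ncard
        = {D : Finset α | IsSParkingSet A D}.ncard := by
  obtain ⟨hf, hc⟩ := SPark.main _ A Finset.univ le_rfl
  have hP : SPark.P A Finset.univ = {f : Fin k → ℕ | IsSParkingFun A f} := by
    ext f; simp [SPark.P, IsSParkingFun]
  have hQ : SPark.Q A Finset.univ = {D : Finset α | IsSParkingSet A D} := by
    ext f; simp [SPark.Q, IsSParkingSet]
  rw [hP, hQ] at hc
  rw [hP] at hf
  have hg : {D : Finset α | IsSParkingSet A D}.Finite := by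
    rw [← Set.encard_ne_top_iff, ← hc, Set.encard_ne_top_iff]; exact hf
  have hn : {f : Fin k → ℕ | IsSParkingFun A f}.ncard
        = {D : Finset α | IsSParkingSet A D}.ncard := by
    rw [Set.ncard, Set.ncard, hc]
  refine ⟨?_, hn⟩
  have i1 : Finite {f : Fin k → ℕ // IsSParkingFun A f} := hf
  have i2 : Finite {D : Finset α // IsSParkingSet A D} := hg
  obtain ⟨e⟩ : Nonempty ({f : Fin k → ℕ // IsSParkingFun A f} ≃
      {D : Finset α // IsSParkingSet A D}) := by
    have f1 := Fintype.ofFinite {f : Fin k → ℕ // IsSParkingFun A f}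
    have f2 := Fintype.ofFinite {D : Finset α // IsSParkingSet A D}
    rw [← Fintype.card_eq, ← Nat.card_eq_fintype_card, ← Nat.card_eq_fintype_card]
    exact hn
  exact ⟨e, e.bijective⟩
end

section
/- Let G be a connected simple graph with vertex set {0,1,…,n}. Then the number of G-parking functions of G (with respect to vertex 0) equals the number of spanning trees of G. -/
/-- `f : {1,…,n} → ℕ` (with vertex `i` of `G` encoded as `i.succ : Fin (n+1)`,
vertex `0` being the root) is a G-parking function of `G` with respect to `0`:
for every nonempty `V' ⊆ {1,…,n}` there is `i ∈ V'` whose number of neighbours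
outside `V'` exceeds `f i`. -/
def IsGParkingFun {n : ℕ} (G : SimpleGraph (Fin (n + 1)))
    [DecidableRel G.Adj] (f : Fin n → ℕ) : Prop :=
  ∀ V' : Finset (Fin n), V'.Nonempty →
    ∃ i ∈ V', f i <
      ((Finset.univ \ V'.image Fin.succ).filter fun v => G.Adj i.succ v).card

namespace GPark

variable {n : ℕ}

/-- Level functions: the root has level `0`. -/
abbrev Lev (n : ℕ) := {l : Fin (n + 1) → ℕ // l 0 = 0}

/-- Parent choices compatible with a level function. -/
abbrev X (G : SimpleGraph (Fin (n + 1))) :=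
  Σ l : Lev n, ∀ i : Fin n, {v // G.Adj i.succ v ∧ l.1 v + 1 = l.1 i.succ}

/-- Number of neighbours of `i` satisfying `P`. -/
def cnt (G : SimpleGraph (Fin (n + 1))) [DecidableRel G.Adj] (i : Fin n)
    (P : Fin (n + 1) → Prop) [DecidablePred P] : ℕ :=
  (Finset.univ.filter fun v => G.Adj i.succ v ∧ P v).card

/-- Values compatible with a level function. -/
abbrev Y (G : SimpleGraph (Fin (n + 1))) [DecidableRel G.Adj] :=
  Σ l : Lev n, ∀ i : Fin n,
    {k : ℕ // cnt G i (fun v => l.1 v + 1 < l.1 i.succ) ≤ k ∧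
      k < cnt G i (fun v => l.1 v < l.1 i.succ)}

section
variable (G : SimpleGraph (Fin (n + 1))) [DecidableRel G.Adj]

lemma cnt_mono (i : Fin n) (P Q : Fin (n + 1) → Prop) [DecidablePred P] [DecidablePred Q]
    (h : ∀ v, P v → Q v) : cnt G i P ≤ cnt G i Q := by
  unfold cnt
  apply Finset.card_le_card
  intro v
  simp only [Finset.mem_filter, Finset.mem_univ, true_and]
  exact fun ⟨a, b⟩ => ⟨a, h v b⟩

lemma cnt_congr (i : Fin n) (P Q : Fin (n + 1) → Prop) [DecidablePred P] [DecidablePred Q]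
    (h : ∀ v, P v ↔ Q v) : cnt G i P = cnt G i Q :=
  le_antisymm (cnt_mono G i P Q fun v => (h v).1) (cnt_mono G i Q P fun v => (h v).2)

lemma cnt_split (i : Fin n) (l : Fin (n + 1) → ℕ) :
    cnt G i (fun v => l v < l i.succ) =
      cnt G i (fun v => l v + 1 < l i.succ) + cnt G i (fun v => l v + 1 = l i.succ) := by
  unfold cnt
  rw [← Finset.card_union_of_disjoint]
  · congr 1
    ext v
    simp only [Finset.mem_filter, Finset.mem_univ, true_and, Finset.mem_union]
    constructor
    · rintro ⟨a, b⟩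
      rcases lt_or_eq_of_le (Nat.succ_le_of_lt b) with h | h
      · exact Or.inl ⟨a, h⟩
      · exact Or.inr ⟨a, h⟩
    · rintro (⟨a, b⟩ | ⟨a, b⟩) <;> exact ⟨a, by omega⟩
  · rw [Finset.disjoint_left]
    intro v
    simp only [Finset.mem_filter, Finset.mem_univ, true_and]
    rintro ⟨_, b⟩ ⟨_, c⟩
    omega

lemma equivXY : Nonempty (X G ≃ Y G) := by
  refine ⟨Equiv.sigmaCongrRight fun l => Equiv.piCongrRight fun i => Nonempty.some ?_⟩
  have e : {k : ℕ // cnt G i (fun v => l.1 v + 1 < l.1 i.succ) ≤ k ∧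
      k < cnt G i (fun v => l.1 v < l.1 i.succ)} ≃
      Finset.Ico (cnt G i (fun v => l.1 v + 1 < l.1 i.succ))
        (cnt G i (fun v => l.1 v < l.1 i.succ)) :=
    Equiv.subtypeEquivRight fun k => by simp
  refine ⟨Equiv.trans (Fintype.equivOfCardEq ?_) e.symm⟩
  rw [Fintype.card_coe, Nat.card_Ico, cnt_split, Fintype.card_subtype, Nat.add_sub_cancel_left]
  rfl

/-! ### Parking functions -/

/-- Relation between the level of a vertex and the value of `f`. -/
lemma level_iff (y : Y G) (i : Fin n) (k : ℕ) :
    y.1.1 i.succ < k + 1 ↔ (y.2 i).1 < cnt G i (fun v => y.1.1 v < k) := by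
  obtain ⟨ha, hb⟩ := (y.2 i).2
  constructor
  · intro h
    exact hb.trans_le (cnt_mono G i _ _ fun v hv => by omega)
  · intro h
    by_contra hk
    have := cnt_mono G i (fun v => y.1.1 v < k) (fun v => y.1.1 v + 1 < y.1.1 i.succ)
      fun v hv => by omega
    omega

/-- The underlying function. -/
def toFun (y : Y G) : Fin n → ℕ := fun i => (y.2 i).1

lemma toFun_parking (y : Y G) : IsGParkingFun G (toFun G y) := by
  intro V' hV
  obtain ⟨i, hi, hmin⟩ := Finset.exists_min_image V' (fun i => y.1.1 i.succ) hV
  refine ⟨i, hi, (y.2 i).2.2.trans_le ?_⟩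
  unfold cnt
  apply Finset.card_le_card
  intro v
  simp only [Finset.mem_filter, Finset.mem_univ, true_and, Finset.mem_sdiff, Finset.mem_image]
  rintro ⟨hadj, hv⟩
  refine ⟨?_, hadj⟩
  rintro ⟨j, hj, rfl⟩
  have := hmin j hj
  omega

lemma toFun_inj : Function.Injective (toFun G) := by
  intro y y' h
  have key : ∀ k v, y.1.1 v < k ↔ y'.1.1 v < k := by
    intro k
    induction k with
    | zero => simp
    | succ k ih =>
      intro v
      refine Fin.cases ?_ (fun i => ?_) v
      · rw [y.1.2, y'.1.2]
      · rw [level_iff, level_iff, cnt_congr G i _ _ ih]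
        have : (y.2 i).1 = (y'.2 i).1 := congrFun h i
        rw [this]
  have hl : y.1 = y'.1 := by
    apply Subtype.ext
    funext v
    have h1 := key (y.1.1 v) v
    have h2 := key (y'.1.1 v) v
    omega
  obtain ⟨l, a⟩ := y
  obtain ⟨l', a'⟩ := y'
  obtain rfl : l = l' := hl
  congr 1
  funext i
  exact Subtype.ext (congrFun h i)

open Classical in
/-- Burning process. -/
noncomputable def burn (f : Fin n → ℕ) : ℕ → Fin (n + 1) → Prop
  | 0 => fun _ => False
  | k + 1 => fun v => v = 0 ∨ ∃ i : Fin n, v = i.succ ∧ f i < cnt G i (burn f k)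

lemma burn_mono_succ (f : Fin n → ℕ) (k : ℕ) : ∀ v, burn G f k v → burn G f (k + 1) v := by
  classical
  induction k with
  | zero => intro v h; exact h.elim
  | succ k ih =>
    rintro v (h | ⟨i, hi, hf⟩)
    · exact Or.inl h
    · exact Or.inr ⟨i, hi, hf.trans_le (cnt_mono G i _ _ ih)⟩

lemma burn_mono (f : Fin n → ℕ) {k m : ℕ} (h : k ≤ m) (v) (hv : burn G f k v) :
    burn G f m v := by
  induction h with
  | refl => exact hv
  | step _ ih => exact burn_mono_succ G f _ v ih

lemma burn_all (f : Fin n → ℕ) (hf : IsGParkingFun G f) (v : Fin (n + 1)) :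
    ∃ k, burn G f k v := by
  classical
  by_contra hv
  have hroot : burn G f 1 0 := Or.inl rfl
  let V' : Finset (Fin n) := Finset.univ.filter fun i => ¬ ∃ k, burn G f k i.succ
  have hne : V'.Nonempty := by
    rcases Fin.eq_zero_or_eq_succ v with rfl | ⟨j, rfl⟩
    · exact (hv ⟨1, hroot⟩).elim
    · exact ⟨j, by simpa [V'] using hv⟩
  obtain ⟨i, hi, hlt⟩ := hf V' hne
  have hex : ∀ u, ∃ k, (∃ m, burn G f m u) → burn G f k u := by
    intro u
    by_cases h : ∃ m, burn G f m u
    · exact ⟨h.choose, fun _ => h.choose_spec⟩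
    · exact ⟨0, fun h' => (h h').elim⟩
  choose K hK using hex
  have hi' : ¬ ∃ k, burn G f k i.succ := (Finset.mem_filter.1 hi).2
  apply hi'
  refine ⟨Finset.univ.sup K + 1, Or.inr ⟨i, rfl, hlt.trans_le ?_⟩⟩
  unfold cnt
  apply Finset.card_le_card
  intro u
  simp only [Finset.mem_filter, Finset.mem_univ, true_and, Finset.mem_sdiff, Finset.mem_image]
  rintro ⟨hu, hadj⟩
  refine ⟨hadj, burn_mono G f (Finset.le_sup (f := K) (Finset.mem_univ u)) u (hK u ?_)⟩
  rcases Fin.eq_zero_or_eq_succ u with rfl | ⟨j, rfl⟩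
  · exact ⟨1, hroot⟩
  · by_contra hc
    exact hu ⟨j, Finset.mem_filter.2 ⟨Finset.mem_univ _, hc⟩, rfl⟩

lemma toFun_surj (f : Fin n → ℕ) (hf : IsGParkingFun G f) : ∃ y, toFun G y = f := by
  classical
  have hex : ∀ v, ∃ k, burn G f (k + 1) v := fun v => by
    obtain ⟨k, hk⟩ := burn_all G f hf v
    exact ⟨k, burn_mono_succ G f k v hk⟩
  let l : Fin (n + 1) → ℕ := fun v => Nat.find (hex v)
  have hl : ∀ k v, l v < k ↔ burn G f k v := by
    intro k v
    constructor
    · intro h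
      exact burn_mono G f h v (Nat.find_spec (hex v))
    · intro h
      cases k with
      | zero => exact h.elim
      | succ k => exact Nat.lt_succ_of_le (Nat.find_min' (hex v) h)
  have h0 : l 0 = 0 := by
    have := (hl 1 0).2 (Or.inl rfl)
    omega
  have hs : ∀ i k, l i.succ < k + 1 ↔ f i < cnt G i (fun v => l v < k) := by
    intro i k
    rw [hl, cnt_congr G i (fun v => l v < k) (burn G f k) (hl k)]
    constructor
    · rintro (h | ⟨j, hj, h⟩)
      · exact (Fin.succ_ne_zero i h).elim
      · obtain rfl := Fin.succ_injective _ hj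
        exact h
    · exact fun h => Or.inr ⟨i, rfl, h⟩
  refine ⟨⟨⟨l, h0⟩, fun i => ⟨f i, ?_, ?_⟩⟩, rfl⟩
  · rcases hm : l i.succ with _ | m
    · simp [cnt, hm]
    · have h1 := hs i m
      have h2 := cnt_congr G i (fun v => l v + 1 < m + 1) (fun v => l v < m) (fun v => by omega)
      simp only [hm] at *
      omega
  · exact (hs i _).1 (Nat.lt_succ_self _)

end

/-! ### Trees -/

section
variable (G : SimpleGraph (Fin (n + 1)))

/-- The graph of parent edges. -/
def pg (p : Fin n → Fin (n + 1)) : SimpleGraph (Fin (n + 1)) :=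
  SimpleGraph.fromEdgeSet (Set.range fun i : Fin n => s(i.succ, p i))

/-- The tree. -/
def toTree (x : X G) : SimpleGraph (Fin (n + 1)) := pg fun i => (x.2 i).1

lemma toTree_adj (x : X G) (u v : Fin (n + 1)) : (toTree G x).Adj u v ↔
    (∃ i : Fin n, u = i.succ ∧ v = (x.2 i).1) ∨ (∃ i : Fin n, v = i.succ ∧ u = (x.2 i).1) := by
  unfold toTree pg
  rw [SimpleGraph.fromEdgeSet_adj]
  constructor
  · rintro ⟨⟨i, hi⟩, -⟩
    rcases Sym2.eq_iff.1 hi with ⟨a, b⟩ | ⟨a, b⟩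
    · exact Or.inl ⟨i, a.symm, b.symm⟩
    · exact Or.inr ⟨i, a.symm, b.symm⟩
  · rintro (⟨i, rfl, rfl⟩ | ⟨i, rfl, rfl⟩)
    · exact ⟨⟨i, rfl⟩, (x.2 i).2.1.ne⟩
    · exact ⟨⟨i, Sym2.eq_swap⟩, (x.2 i).2.1.ne'⟩

lemma toTree_parent (x : X G) (i : Fin n) : (toTree G x).Adj i.succ (x.2 i).1 :=
  (toTree_adj G x _ _).2 (Or.inl ⟨i, rfl, rfl⟩)

lemma toTree_le (x : X G) : toTree G x ≤ G := by
  intro u v h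
  rcases (toTree_adj G x u v).1 h with ⟨i, rfl, rfl⟩ | ⟨i, rfl, rfl⟩
  · exact (x.2 i).2.1
  · exact (x.2 i).2.1.symm

lemma toTree_walk (x : X G) : ∀ k v, x.1.1 v = k →
    ∃ w : (toTree G x).Walk v 0, w.length = k := by
  intro k
  induction k with
  | zero =>
    intro v hv
    rcases Fin.eq_zero_or_eq_succ v with rfl | ⟨j, rfl⟩
    · exact ⟨SimpleGraph.Walk.nil, rfl⟩
    · have := (x.2 j).2.2
      omega
  | succ k ih =>
    intro v hv
    rcases Fin.eq_zero_or_eq_succ v with rfl | ⟨j, rfl⟩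
    · have := x.1.2
      omega
    · have := (x.2 j).2.2
      obtain ⟨w, hw⟩ := ih (x.2 j).1 (by omega)
      exact ⟨SimpleGraph.Walk.cons (toTree_parent G x j) w, by simp [hw]⟩

lemma toTree_conn (x : X G) : (toTree G x).Connected := by
  have h : ∀ v, (toTree G x).Reachable v 0 := fun v => ⟨(toTree_walk G x _ v rfl).choose⟩
  exact { preconnected := fun u v => (h u).trans (h v).symm, nonempty := ⟨0⟩ }

lemma toTree_level_le (x : X G) (u v : Fin (n + 1)) (w : (toTree G x).Walk u v) :
    x.1.1 u ≤ x.1.1 v + w.length := by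
  induction w with
  | nil => simp
  | cons h w ih =>
    rw [SimpleGraph.Walk.length_cons]
    rcases (toTree_adj G x _ _).1 h with ⟨i, rfl, rfl⟩ | ⟨i, rfl, rfl⟩
    · have := (x.2 i).2.2
      omega
    · have := (x.2 i).2.2
      omega

lemma toTree_dist (x : X G) (v : Fin (n + 1)) : (toTree G x).dist v 0 = x.1.1 v := by
  apply le_antisymm
  · obtain ⟨w, hw⟩ := toTree_walk G x _ v rfl
    exact (SimpleGraph.dist_le w).trans hw.le
  · obtain ⟨w, hw⟩ := (toTree_conn G x).exists_walk_length_eq_dist v 0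
    have := toTree_level_le G x v 0 w
    have := x.1.2
    omega

lemma toTree_isTree (x : X G) : (toTree G x).IsTree := by
  rw [SimpleGraph.isTree_iff_connected_and_card]
  refine ⟨toTree_conn G x, le_antisymm ?_ (toTree_conn G x).card_vert_le_card_edgeSet_add_one⟩
  have hsub : (toTree G x).edgeSet ⊆ Set.range fun i : Fin n => s(i.succ, (x.2 i).1) := by
    unfold toTree pg
    rw [SimpleGraph.edgeSet_fromEdgeSet]
    exact Set.sdiff_subset
  have h1 := Set.ncard_le_ncard hsub (Set.finite_range _)
  have h2 : (Set.range fun i : Fin n => s(i.succ, (x.2 i).1)).ncard ≤ n := by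
    rw [← Set.image_univ]
    refine (Set.ncard_image_le Set.finite_univ).trans ?_
    simp [Set.ncard_univ]
  rw [Nat.card_coe_set_eq]
  simp only [Nat.card_eq_fintype_card, Fintype.card_fin]
  omega

lemma toTree_inj : Function.Injective (toTree G) := by
  intro x x' h
  have hl : x.1 = x'.1 := by
    apply Subtype.ext
    funext v
    rw [← toTree_dist, ← toTree_dist, h]
  have hp : ∀ i, (x.2 i).1 = (x'.2 i).1 := by
    intro i
    have h1 := toTree_parent G x' i
    rw [← h] at h1
    have h3 := (x'.2 i).2.2
    have h4 : ∀ v, x.1.1 v = x'.1.1 v := fun v => by rw [hl]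
    have h5 := h4 (x'.2 i).1
    have h6 := h4 i.succ
    rcases (toTree_adj G x _ _).1 h1 with ⟨j, hj, e⟩ | ⟨j, hj, e⟩
    · obtain rfl := Fin.succ_injective _ hj
      exact e.symm
    · have h2 := (x.2 j).2.2
      have h7 := congrArg x.1.1 hj
      have h8 := congrArg x.1.1 e
      omega
  obtain ⟨l, a⟩ := x
  obtain ⟨l', a'⟩ := x'
  obtain rfl : l = l' := hl
  congr 1
  funext i
  exact Subtype.ext (hp i)

lemma toTree_surj (T : SimpleGraph (Fin (n + 1))) (hle : T ≤ G) (hT : T.IsTree) :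
    ∃ x, toTree G x = T := by
  have hex : ∀ i : Fin n, ∃ v, T.Adj i.succ v ∧ T.dist v 0 + 1 = T.dist i.succ 0 := by
    intro i
    obtain ⟨w, hw⟩ := hT.connected.exists_walk_length_eq_dist i.succ 0
    cases w with
    | cons h w =>
      rename_i v
      refine ⟨v, h, ?_⟩
      rw [SimpleGraph.Walk.length_cons] at hw
      have h1 := SimpleGraph.dist_le w
      have h2 := hT.connected.dist_triangle (u := i.succ) (v := v) (w := 0)
      have h3 := SimpleGraph.dist_eq_one_iff_adj.2 h
      omega
  choose p hp using hex
  let x : X G := ⟨⟨fun v => T.dist v 0, by simp⟩, fun i => ⟨p i, hle (hp i).1, (hp i).2⟩⟩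
  have hxT : toTree G x ≤ T := by
    intro u v h
    rcases (toTree_adj G x u v).1 h with ⟨i, rfl, rfl⟩ | ⟨i, rfl, rfl⟩
    · exact (hp i).1
    · exact (hp i).1.symm
  refine ⟨x, le_antisymm hxT ?_⟩
  exact (SimpleGraph.isTree_iff_minimal_connected.1 hT).2 (toTree_conn G x) hxT

end

end GPark

theorem card_gParkingFun_eq_card_spanningTrees {n : ℕ}
    (G : SimpleGraph (Fin (n + 1))) [DecidableRel G.Adj] (hG : G.Connected) :
    {f : Fin n → ℕ | IsGParkingFun G f}.ncard
      = {T : SimpleGraph (Fin (n + 1)) | T ≤ G ∧ T.IsTree}.ncard := by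
  have h1 : {f : Fin n → ℕ | IsGParkingFun G f} = Set.range (GPark.toFun G) := by
    ext f
    constructor
    · exact fun hf => GPark.toFun_surj G f hf
    · rintro ⟨y, rfl⟩
      exact GPark.toFun_parking G y
  have h2 : {T : SimpleGraph (Fin (n + 1)) | T ≤ G ∧ T.IsTree} = Set.range (GPark.toTree G) := by
    ext T
    constructor
    · exact fun hT => GPark.toTree_surj G T hT.1 hT.2
    · rintro ⟨x, rfl⟩
      exact ⟨GPark.toTree_le G x, GPark.toTree_isTree G x⟩
  rw [h1, h2, ← Nat.card_coe_set_eq, ← Nat.card_coe_set_eq,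
    Nat.card_range_of_injective (GPark.toFun_inj G),
    Nat.card_range_of_injective (GPark.toTree_inj G)]
  exact (Nat.card_congr (GPark.equivXY G).some).symm
end
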